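/- arXiv:0903.5018 — 4 statements merged into one kernel-verified Lean document; each statement's English description precedes it below -/
import Mathlib

section
/- Let k be an algebraically closed field of characteristic zero. Let r ≥ 0, s ≥ 1, p ≥ 0 be integers, and let d_1 ≤ … ≤ d_s be integers with d_i ≥ 2 for all i, with d_{s-1} < d_s when s ≥ 2, and with t := d_s ≥ 3. Assume (r+2)·p + r + 1 ≥ (Σ_{i=1}^s C(d_i + r + 1, r + 1)) − 1. Then there exist homogeneous elements a_{i,j} ∈ R_{d_i − 1} (for 1 ≤ i ≤ s, 1 ≤ j ≤ p) and homogeneous elements b_i ∈ R_{d_i − 1} satisfying x̄_0 · b_i = 0 (for 1 ≤ i ≤ s), such that the k-linear map from (R_1)^{p+1} to the direct sum ⊕_{i=1}^s R_{d_i} sending (v_1, …, v_p, w) to the tuple whose i-th component is Σ_{j=1}^p a_{i,j}·v_j + b_i·w, is surjective. -/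
open MvPolynomial

/-- The graded ring `R = k[x₀, …, x_{r+1}]/(x₀ᵗ)` of a `t`-fat `r`-plane. -/
abbrev fatRing (k : Type*) [Field k] (r t : ℕ) : Type _ :=
  MvPolynomial (Fin (r + 2)) k ⧸
    Ideal.span {(X 0 : MvPolynomial (Fin (r + 2)) k) ^ t}

/-- The degree-`e` homogeneous component of `R = k[x₀, …, x_{r+1}]/(x₀ᵗ)`, namely the
image of the degree-`e` homogeneous forms under the quotient map. -/
noncomputable def fatRingComp (k : Type*) [Field k] (r t e : ℕ) :
    Submodule k (fatRing k r t) :=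
  (homogeneousSubmodule (Fin (r + 2)) k e).map
    (Ideal.Quotient.mkₐ k
      (Ideal.span {(X 0 : MvPolynomial (Fin (r + 2)) k) ^ t})).toLinearMap


theorem num_step (e h : ℕ) : (h + 1) * Nat.choose (e + h) (e + 1) ≤ h * Nat.choose (e + h + 1) (e + 1) := by
  have h1 := Nat.choose_succ_right_eq (e + h) e
  have h3 : e + h - e = h := by omega
  rw [h3] at h1
  rw [Nat.choose_succ_succ (e + h) e]
  nlinarith

theorem num_step3 (e h : ℕ) (he : 2 ≤ e) :
    (h + 1) * Nat.choose (e + h) (e + 1) + h * (h + 1) ≤ h * Nat.choose (e + h + 1) (e + 1) := by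
  rcases Nat.eq_zero_or_pos h with rfl | hh
  · simp
  have h1 := Nat.choose_succ_right_eq (e + h) e
  have h3 : e + h - e = h := by omega
  rw [h3] at h1
  rw [Nat.choose_succ_succ (e + h) e]
  -- need e * choose (e+h) (e+1) ≥ h (h+1)
  have h5 : Nat.choose (h + 2) 3 ≤ Nat.choose (e + h) (e + 1) := by
    have a1 : Nat.choose (h + 2) (h - 1) = Nat.choose (h + 2) 3 :=
      Nat.choose_symm_of_eq_add (by omega)
    have a2 : Nat.choose (e + h) (h - 1) = Nat.choose (e + h) (e + 1) :=
      Nat.choose_symm_of_eq_add (by omega)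
    rw [← a1, ← a2]
    exact Nat.choose_le_choose _ (by omega)
  have h6 : 2 * (h * (h + 1)) ≤ 2 * (2 * Nat.choose (h + 2) 3) := by
    have b1 := Nat.choose_succ_right_eq (h + 2) 2
    have b2 := Nat.choose_succ_right_eq (h + 2) 1
    simp at b1 b2
    nlinarith
  nlinarith

theorem num_main (n s p : ℕ) (e : Fin s → ℕ) (i0 : Fin s) (h0 : 2 ≤ e i0)
    (hG : ∑ i, Nat.choose (e i + n) (e i + 1) ≤ n * (p + 1)) (h : ℕ) (hh : h ≤ n) :
    (∑ i, Nat.choose (e i + h) (e i + 1)) + h * n ≤ h * h + h * (p + 1) := by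
  induction hh using Nat.decreasingInduction with
  | self => linarith
  | of_succ h hlt ih =>
    have key : (h + 1) * (∑ i, Nat.choose (e i + h) (e i + 1)) + h * (h + 1) ≤
        h * ∑ i, Nat.choose (e i + (h + 1)) (e i + 1) := by
      rw [← Finset.add_sum_erase _ _ (Finset.mem_univ i0),
        ← Finset.add_sum_erase (a := i0) (f := fun i => Nat.choose (e i + (h + 1)) (e i + 1)) _ (Finset.mem_univ i0),
        mul_add (h + 1) (Nat.choose _ _), mul_add h (Nat.choose _ _), Finset.mul_sum, Finset.mul_sum]
      have := num_step3 (e i0) h h0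
      have h2 : ∑ i ∈ Finset.univ.erase i0, (h + 1) * Nat.choose (e i + h) (e i + 1) ≤
         ∑ i ∈ Finset.univ.erase i0, h * Nat.choose (e i + (h + 1)) (e i + 1) :=
        Finset.sum_le_sum fun i _ => num_step (e i) h
      simp only [← add_assoc] at *
      linarith
    have : (h + 1) * ((∑ i, Nat.choose (e i + h) (e i + 1)) + h * n) ≤ (h + 1) * (h * h + h * (p + 1)) := by
      nlinarith
    exact Nat.le_of_mul_le_mul_left this (by omega)

theorem card_ker_mul {F U W : Type*} [Field F] [Finite F] [AddCommGroup U] [Module F U] [Module.Finite F U]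
    [AddCommGroup W] [Module F W] (f : U →ₗ[F] W) :
    Nat.card (LinearMap.ker f) * Nat.card F ^ (Module.finrank F (LinearMap.range f)) = Nat.card U := by
  rw [Module.natCard_eq_pow_finrank (K := F) (V := U),
    Module.natCard_eq_pow_finrank (K := F) (V := LinearMap.ker f), ← pow_add,
    add_comm, LinearMap.finrank_range_add_finrank_ker]

/-- The map `u ↦ φ (μ u ·)`. -/
noncomputable def Tmap {F U V L : Type*} [Field F] [AddCommGroup U] [Module F U]
    [AddCommGroup V] [Module F V] [AddCommGroup L] [Module F L]
    (μ : U →ₗ[F] L →ₗ[F] V) (φ : Module.Dual F V) : U →ₗ[F] Module.Dual F L :=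
  μ.compr₂ φ

theorem exists_surj {F U V L : Type*} [Field F] [Finite F] [AddCommGroup U] [Module F U] [Module.Finite F U]
    [AddCommGroup V] [Module F V] [Module.Finite F V] [AddCommGroup L] [Module F L] 
    (μ : U →ₗ[F] L →ₗ[F] V) (u0 : U) (p : ℕ) (Φ : Finset (Module.Dual F V))
    (hΦ : ∀ φ, φ ∈ Φ ↔ Tmap μ φ u0 = 0)
    (hsum : ∑ φ ∈ Φ, Nat.card (LinearMap.ker (Tmap μ φ)) ^ p < Nat.card F * Nat.card U ^ p) :
    ∃ a : Fin p → U, ∀ c : V, ∃ (v : Fin p → L) (w : L), c = (∑ j, μ (a j) (v j)) + μ u0 w := by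
  classical
  by_contra! hcon
  have : Finite U := Module.finite_of_finite F
  have : Fintype U := Fintype.ofFinite U
  have : Fintype F := Fintype.ofFinite F
  have key : ∀ a : Fin p → U, Nat.card F ≤ (Φ.filter fun φ => ∀ j, Tmap μ φ (a j) = 0).card := by
    intro a
    obtain ⟨c, hc⟩ := hcon a
    let W : Submodule F V := (⨆ j, LinearMap.range (μ (a j))) ⊔ LinearMap.range (μ u0)
    have hcW : c ∉ W := by
      intro h
      obtain ⟨y, hy, z, ⟨w, rfl⟩, hyz⟩ := Submodule.mem_sup.1 h
      obtain ⟨f, hf⟩ := (Submodule.mem_iSup_iff_exists_finsupp _ _).1 hy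
      choose hf1 hf2 using hf
      choose v hv using hf1
      refine hc v w ?_
      rw [← hyz, ← hf2, Finsupp.sum_fintype _ _ (by simp)]
      simp [hv]
    obtain ⟨φ, hφ1, hφ2⟩ := Submodule.exists_le_ker_of_notMem hcW
    have hm : ∀ x : F, x • φ ∈ (Φ.filter fun φ => ∀ j, Tmap μ φ (a j) = 0) := by
      intro x
      rw [Finset.mem_filter, hΦ]
      refine ⟨?_, fun j => ?_⟩
      · ext l
        have : μ u0 l ∈ W := Submodule.mem_sup_right ⟨l, rfl⟩
        have := hφ2 this
        rw [LinearMap.mem_ker] at this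
        simp [Tmap, this]
      · ext l
        have : μ (a j) l ∈ W := Submodule.mem_sup_left (Submodule.mem_iSup_of_mem j ⟨l, rfl⟩)
        have := hφ2 this
        rw [LinearMap.mem_ker] at this
        simp [Tmap, this]
    rw [Nat.card_eq_fintype_card, ← Finset.card_univ]
    refine Finset.card_le_card_of_injOn (fun x => x • φ) (fun x _ => hm x) ?_
    intro x _ y _ hxy
    have := congrArg (fun ψ : Module.Dual F V => ψ c) hxy
    simpa [hφ1] using this
  have h1 : ∑ a : Fin p → U, Nat.card F ≤ ∑ a : Fin p → U, (Φ.filter fun φ => ∀ j, Tmap μ φ (a j) = 0).card :=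
    Finset.sum_le_sum fun a _ => key a
  have h2 : ∑ a : Fin p → U, (Φ.filter fun φ => ∀ j, Tmap μ φ (a j) = 0).card =
      ∑ φ ∈ Φ, Nat.card (LinearMap.ker (Tmap μ φ)) ^ p := by
    simp_rw [Finset.card_filter]
    rw [Finset.sum_comm]
    refine Finset.sum_congr rfl fun φ _ => ?_
    rw [← Finset.card_filter]
    have : Nat.card (Fin p → LinearMap.ker (Tmap μ φ)) = Nat.card (LinearMap.ker (Tmap μ φ)) ^ p := by
      simp
    rw [← this, ← Nat.card_eq_finsetCard]
    refine Nat.card_congr ⟨fun a j => ⟨a.1 j, (Finset.mem_filter.1 a.2).2 j⟩,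
      fun a => ⟨fun j => a j, by simp⟩, fun a => rfl, fun a => rfl⟩
  rw [h2] at h1
  simp at h1 hsum
  rw [mul_comm] at h1
  omega

/-- Linear form with given coefficients. -/
noncomputable def lin (F : Type*) [Field F] (n : ℕ) : (Fin n → F) →ₗ[F] MvPolynomial (Fin n) F :=
  Fintype.linearCombination F (fun l => (X l : MvPolynomial (Fin n) F))

theorem lin_apply (F : Type*) [Field F] (n : ℕ) (v : Fin n → F) :
    lin F n v = ∑ l, v l • (X l : MvPolynomial (Fin n) F) := rfl

theorem lin_single (F : Type*) [Field F] (n : ℕ) (l : Fin n) :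
    lin F n (Pi.single l 1) = X l := by
  classical
  simp [lin_apply, Pi.single_apply]

theorem lin_hom (F : Type*) [Field F] (n : ℕ) (v : Fin n → F) : (lin F n v).IsHomogeneous 1 := by
  rw [lin_apply]
  refine IsHomogeneous.sum _ _ _ fun i _ => ?_
  rw [smul_eq_C_mul]
  exact (isHomogeneous_X F i).C_mul _

theorem lin_inj (F : Type*) [Field F] (n : ℕ) : Function.Injective (lin F n) := by
  classical
  rw [injective_iff_map_eq_zero]
  intro v hv
  ext l
  have := congrArg (coeff (Finsupp.single l 1)) hv
  simpa [lin_apply, coeff_sum, coeff_X, Finsupp.single_left_inj] using this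

/-- Tuples of forms of degrees `f i`. -/
abbrev HV (F : Type*) [Field F] (n : ℕ) {s : ℕ} (f : Fin s → ℕ) : Type _ :=
  (i : Fin s) → homogeneousSubmodule (Fin n) F (f i)

instance (F : Type*) [Field F] (n d : ℕ) : Module.Finite F (homogeneousSubmodule (Fin n) F d) :=
  Module.Finite.iff_fg.2 (homogeneousSubmodule_fg _ _ _)

theorem finrank_hom_le (F : Type*) [Field F] (n d : ℕ) :
    Module.finrank F (homogeneousSubmodule (Fin n) F (d + 1)) ≤ Nat.choose (d + n) (d + 1) := by
  classical
  let S := Finset.finsuppAntidiag (Finset.univ : Finset (Fin n)) (d + 1)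
  let g : homogeneousSubmodule (Fin n) F (d + 1) →ₗ[F] (S → F) :=
    LinearMap.pi fun m => (lcoeff F m.1) ∘ₗ Submodule.subtype _
  have hg : Function.Injective g := by
    rw [injective_iff_map_eq_zero]
    intro x hx
    ext m
    by_cases hm : m.degree = d + 1
    · have := congrFun hx ⟨m, by simp [S, Finset.mem_finsuppAntidiag]; rw [← hm, Finsupp.degree_eq_sum]⟩
      simpa [g] using this
    · simpa using IsHomogeneous.coeff_eq_zero x.2 hm
  have h1 := LinearMap.finrank_le_finrank_of_injective hg
  have h2 : Fintype.card S = Nat.choose (d + n) (d + 1) := by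
    rw [Fintype.card_coe, Finset.card_finsuppAntidiag_nat_eq_choose]
    simp
    congr 1
    omega
  simpa [h2] using h1

theorem finrank_HV_le (F : Type*) [Field F] (n : ℕ) {s : ℕ} (e : Fin s → ℕ) :
    Module.finrank F (HV F n (fun i => e i + 1)) ≤ ∑ i, Nat.choose (e i + n) (e i + 1) := by
  rw [Module.finrank_pi_fintype]
  exact Finset.sum_le_sum fun i _ => finrank_hom_le F n (e i)

/-- Multiplication. -/
noncomputable def mulMap (F : Type*) [Field F] (n : ℕ) {s : ℕ} (e : Fin s → ℕ) :
    HV F n e →ₗ[F] (Fin n → F) →ₗ[F] HV F n (fun i => e i + 1) :=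
  LinearMap.mk₂ F (fun u v i => ⟨(u i : MvPolynomial (Fin n) F) * lin F n v,
      IsHomogeneous.mul (u i).2 (lin_hom F n v)⟩)
    (by intros; ext1; ext1; simp [add_mul])
    (by intros; ext1; ext1; simp)
    (by intros; ext1; ext1; simp [mul_add])
    (by intros; ext1; ext1; simp)

@[simp] theorem mulMap_apply (F : Type*) [Field F] (n : ℕ) {s : ℕ} (e : Fin s → ℕ)
    (u : HV F n e) (v : Fin n → F) (i : Fin s) :
    ((mulMap F n e u v i : homogeneousSubmodule (Fin n) F (e i + 1)) : MvPolynomial (Fin n) F) =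
      (u i : MvPolynomial (Fin n) F) * lin F n v := rfl

/-- Substitution algebra hom. -/
noncomputable def symA {F : Type*} [Field F] {n h : ℕ} (π : (Fin n → F) →ₗ[F] (Fin h → F)) :
    MvPolynomial (Fin n) F →ₐ[F] MvPolynomial (Fin h) F :=
  aeval (fun l => lin F h (π (Pi.single l 1)))

theorem symA_lin {F : Type*} [Field F] {n h : ℕ} (π : (Fin n → F) →ₗ[F] (Fin h → F)) (v : Fin n → F) :
    symA π (lin F n v) = lin F h (π v) := by
  classical
  have : (symA π).toLinearMap ∘ₗ lin F n = lin F h ∘ₗ π := by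
    ext l : 2
    simp [lin_single, symA]
  exact LinearMap.congr_fun this v

theorem symA_hom {F : Type*} [Field F] {n h : ℕ} (π : (Fin n → F) →ₗ[F] (Fin h → F))
    {d : ℕ} {f : MvPolynomial (Fin n) F} (hf : f.IsHomogeneous d) : (symA π f).IsHomogeneous d := by
  have := IsHomogeneous.aeval hf (fun l => lin F h (π (Pi.single l 1))) (n := 1) (fun l => lin_hom F h _)
  simpa [symA] using this

/-- Substitution on tuples. -/
noncomputable def symM {F : Type*} [Field F] {n h : ℕ} (π : (Fin n → F) →ₗ[F] (Fin h → F))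
    {s : ℕ} (f : Fin s → ℕ) : HV F n f →ₗ[F] HV F h f :=
  LinearMap.pi fun i => ((symA π).toLinearMap.restrict (p := homogeneousSubmodule (Fin n) F (f i))
    (q := homogeneousSubmodule (Fin h) F (f i)) (fun _ hx => symA_hom π hx)) ∘ₗ LinearMap.proj i

@[simp] theorem symM_apply {F : Type*} [Field F] {n h : ℕ} (π : (Fin n → F) →ₗ[F] (Fin h → F))
    {s : ℕ} (f : Fin s → ℕ) (x : HV F n f) (i : Fin s) :
    ((symM π f x i : homogeneousSubmodule (Fin h) F (f i)) : MvPolynomial (Fin h) F) =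
      symA π (x i : MvPolynomial (Fin n) F) := rfl

theorem homComp_mul_lin {F : Type*} [Field F] {n : ℕ} (d : ℕ) (g : MvPolynomial (Fin n) F) (v : Fin n → F) :
    homogeneousComponent (d + 1) (g * lin F n v) = homogeneousComponent d g * lin F n v := by
  classical
  have h0 : ∀ m, homogeneousComponent (d + 1) (homogeneousComponent m g * lin F n v) =
      if m = d then homogeneousComponent d g * lin F n v else 0 := by
    intro m
    rw [homogeneousComponent_of_mem (n := m + 1)
      (IsHomogeneous.mul (homogeneousComponent_isHomogeneous m g) (lin_hom F n v))]
    by_cases hm : m = d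
    · simp [hm]
    · simp [hm, Ne.symm hm]
  conv_lhs => rw [← sum_homogeneousComponent g, Finset.sum_mul, map_sum]
  simp_rw [h0]
  rw [Finset.sum_ite_eq']
  split_ifs with hd
  · rfl
  · rw [homogeneousComponent_eq_zero _ _ (by simpa using hd), zero_mul]

/-- Factorization of a functional through its essential variables. -/
theorem factor {F : Type*} [Field F] {n h : ℕ} (π : (Fin n → F) →ₗ[F] (Fin h → F))
    (hπ : Function.Surjective π) {s : ℕ} (e : Fin s → ℕ)
    (φ : Module.Dual F (HV F n (fun i => e i + 1)))
    (hK : ∀ v, π v = 0 → ∀ u, φ (mulMap F n e u v) = 0) :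
    ∃ ψ : Module.Dual F (HV F h (fun i => e i + 1)), φ = ψ ∘ₗ symM π (fun i => e i + 1) := by
  classical
  obtain ⟨σ, hσ⟩ := LinearMap.exists_rightInverse_of_surjective π (LinearMap.range_eq_top.2 hπ)
  refine ⟨φ ∘ₗ symM σ _, ?_⟩
  ext i x
  -- extension of φ at i to all polynomials
  let φi : MvPolynomial (Fin n) F →ₗ[F] F :=
    φ ∘ₗ LinearMap.single F _ i ∘ₗ
      (homogeneousComponent (e i + 1)).codRestrict (homogeneousSubmodule (Fin n) F (e i + 1))
        (fun y => homogeneousComponent_isHomogeneous _ _)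
  have hφi : ∀ y : homogeneousSubmodule (Fin n) F (e i + 1),
      φi y = φ (Pi.single i y) := by
    intro y
    simp only [φi, LinearMap.comp_apply, LinearMap.single_apply]
    congr 2
    ext1
    exact homogeneousComponent_eq_self y.2
  let I : Ideal (MvPolynomial (Fin n) F) := Ideal.span (lin F n '' (LinearMap.ker π : Set (Fin n → F)))
  have hkill : ∀ v, π v = 0 → ∀ g, φi (g * lin F n v) = 0 := by
    intro v hv g
    have := hK v hv (Pi.single i ⟨homogeneousComponent (e i) g, homogeneousComponent_isHomogeneous _ _⟩)
    rw [← this]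
    simp only [φi, LinearMap.comp_apply, LinearMap.single_apply]
    congr 1
    ext1 j
    by_cases hj : j = i
    · subst hj
      ext1
      simp only [Pi.single_eq_same, mulMap_apply]
      exact homComp_mul_lin _ _ _
    · ext1
      simp [hj]
  have hI' : ∀ f ∈ I, ∀ g, φi (g * f) = 0 := by
    intro f hf
    induction hf using Submodule.span_induction with
    | mem x hx => obtain ⟨v, hv, rfl⟩ := hx; exact hkill v hv
    | zero => simp
    | add x y _ _ hx hy => simp [mul_add, hx, hy]
    | smul a x _ hx => intro g; rw [smul_eq_mul, ← mul_assoc]; exact hx _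
  have hI : ∀ f ∈ I, φi f = 0 := fun f hf => by simpa using hI' f hf 1
  have hρ : ∀ f, f - symA σ (symA π f) ∈ I := by
    intro f
    rw [← Ideal.Quotient.eq]
    have : Ideal.Quotient.mkₐ F I = ((Ideal.Quotient.mkₐ F I).comp (symA σ)).comp (symA π) := by
      ext l
      simp only [AlgHom.comp_apply]
      rw [← lin_single, symA_lin, symA_lin]
      rw [Ideal.Quotient.mkₐ_eq_mk, Ideal.Quotient.eq, ← map_sub]
      refine Ideal.subset_span ⟨_, ?_, rfl⟩
      have := LinearMap.congr_fun hσ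
      simp at this
      simp [this]
    exact AlgHom.congr_fun this f
  have h1 := hI _ (hρ (x : MvPolynomial (Fin n) F))
  rw [map_sub, sub_eq_zero, hφi x] at h1
  have h2 := hφi ⟨symA σ (symA π (x : MvPolynomial (Fin n) F)), symA_hom _ (symA_hom _ x.2)⟩
  simp only at h2
  simp only [LinearMap.comp_apply, LinearMap.single_apply]
  rw [h1, h2]
  congr 1
  ext1 j
  by_cases hj : j = i
  · subst hj
    ext1
    simp
  · ext1
    simp [hj]

theorem card_GL_ge (F : Type*) [Field F] [Finite F] (h : ℕ) :
    Nat.card F ^ (h * h) ≤ 2 ^ h * Nat.card (GL (Fin h) F) := by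
  have : Fintype F := Fintype.ofFinite F
  rw [Matrix.card_GL_field, Nat.card_eq_fintype_card, pow_mul]
  have h2 : 2 ≤ Fintype.card F := Fintype.one_lt_card
  have e1 : (Fintype.card F ^ h) ^ h = ∏ _i : Fin h, Fintype.card F ^ h := by simp
  have e2 : 2 ^ h = ∏ _i : Fin h, 2 := by simp
  rw [e1, e2, ← Finset.prod_mul_distrib]
  refine Finset.prod_le_prod' fun i _ => ?_
  have h3 : Fintype.card F ^ ((i : ℕ) + 1) ≤ Fintype.card F ^ h :=
    Nat.pow_le_pow_right (by omega) i.2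
  rw [pow_succ] at h3
  have h4 : Fintype.card F ^ (i : ℕ) * 2 ≤ Fintype.card F ^ (i : ℕ) * Fintype.card F :=
    Nat.mul_le_mul_left _ h2
  omega

/-- The tuple with a single nonzero entry, a power of a linear form. -/
noncomputable def powTuple (F : Type*) [Field F] (n : ℕ) {s : ℕ} (e : Fin s → ℕ) (i0 : Fin s)
    (y : Fin n → F) : HV F n e :=
  Pi.single i0 ⟨lin F n y ^ e i0, by simpa using (lin_hom F n y).pow (e i0)⟩

theorem symM_powTuple {F : Type*} [Field F] {n h : ℕ} (π : (Fin n → F) →ₗ[F] (Fin h → F))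
    {s : ℕ} (e : Fin s → ℕ) (i0 : Fin s) (y v : Fin n → F) :
    symM π (fun i => e i + 1) (mulMap F n e (powTuple F n e i0 y) v) =
      mulMap F h e (powTuple F h e i0 (π y)) (π v) := by
  ext1 i
  ext1
  by_cases hi : i = i0
  · subst hi
    simp [powTuple, symA_lin]
  · simp [powTuple, hi]

theorem exists_pi {F : Type*} [Field F] {n h s : ℕ} (e : Fin s → ℕ)
    (φ : Module.Dual F (HV F n (fun i => e i + 1)))
    (hφ : Module.finrank F (LinearMap.range (Tmap (mulMap F n e) φ)) = h) :
    ∃ π : (Fin n → F) →ₗ[F] (Fin h → F), Function.Surjective π ∧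
      ∀ v, π v = 0 → ∀ u, φ (mulMap F n e u v) = 0 := by
  let K : Submodule F (Fin n → F) := (LinearMap.range (Tmap (mulMap F n e) φ)).dualCoannihilator
  have h1 : h + Module.finrank F K = Module.finrank F (Fin n → F) := by
    rw [← hφ]; exact Subspace.finrank_add_finrank_dualCoannihilator_eq _
  have h2 := Submodule.finrank_quotient_add_finrank K
  have h3 : Module.finrank F ((Fin n → F) ⧸ K) = Module.finrank F (Fin h → F) := by
    rw [Module.finrank_fin_fun F (n := h)]; omega
  let E := LinearEquiv.ofFinrankEq _ _ h3
  refine ⟨E.toLinearMap ∘ₗ K.mkQ, E.surjective.comp K.mkQ_surjective, ?_⟩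
  intro v hv u
  have hv' : v ∈ K := by simpa using hv
  have := (Submodule.mem_dualCoannihilator v).1 hv' _ (LinearMap.mem_range_self _ u)
  simpa [Tmap] using this

/-- The functionals of rank `h` that vanish on the special column. -/
def PhiSet (F : Type*) [Field F] (n h : ℕ) {s : ℕ} (e : Fin s → ℕ) (i0 : Fin s)
    (y : Fin n → F) : Set (Module.Dual F (HV F n (fun i => e i + 1))) :=
  {φ | Tmap (mulMap F n e) φ (powTuple F n e i0 y) = 0 ∧
    Module.finrank F (LinearMap.range (Tmap (mulMap F n e) φ)) = h}

/-- Pairs of a linear map and a functional vanishing on the image of the special column. -/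
def YSet (F : Type*) [Field F] (n h : ℕ) {s : ℕ} (e : Fin s → ℕ) (i0 : Fin s)
    (y : Fin n → F) : Set (((Fin n → F) →ₗ[F] (Fin h → F)) × Module.Dual F (HV F h (fun i => e i + 1))) :=
  {x | x.2 ∘ₗ (mulMap F h e (powTuple F h e i0 (x.1 y))) = 0}

theorem card_Phi_mul_GL (F : Type*) [Field F] [Finite F] (n h : ℕ) {s : ℕ} (e : Fin s → ℕ) (i0 : Fin s)
    (y : Fin n → F) :
    Nat.card (PhiSet F n h e i0 y) * Nat.card (GL (Fin h) F) ≤ Nat.card (YSet F n h e i0 y) := by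
  classical
  rw [← Nat.card_prod]
  have hex : ∀ φ : PhiSet F n h e i0 y, ∃ π : (Fin n → F) →ₗ[F] (Fin h → F), Function.Surjective π ∧
      ∀ v, π v = 0 → ∀ u, φ.1 (mulMap F n e u v) = 0 := fun φ => exists_pi e φ.1 φ.2.2
  choose P hP1 hP2 using hex
  have hinv : ∀ g : GL (Fin h) F, ∀ x, Matrix.toLin' (g⁻¹ : GL (Fin h) F).1 (Matrix.toLin' g.1 x) = x := by
    intro g x
    rw [← LinearMap.comp_apply, ← Matrix.toLin'_mul]
    simp
  have hinv' : ∀ g : GL (Fin h) F, ∀ x, Matrix.toLin' g.1 (Matrix.toLin' (g⁻¹ : GL (Fin h) F).1 x) = x := by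
    intro g x
    simp
  have hsurj : ∀ (φ : PhiSet F n h e i0 y) (g : GL (Fin h) F),
      Function.Surjective (Matrix.toLin' g.1 ∘ₗ P φ) := by
    intro φ g
    rw [LinearMap.coe_comp]
    exact Function.Surjective.comp (fun x => ⟨_, hinv' g x⟩) (hP1 φ)
  have hfac : ∀ x : PhiSet F n h e i0 y × GL (Fin h) F,
      ∃ ψ : Module.Dual F (HV F h (fun i => e i + 1)),
        x.1.1 = ψ ∘ₗ symM (Matrix.toLin' x.2.1 ∘ₗ P x.1) (fun i => e i + 1) := by
    intro x
    refine factor _ (hsurj x.1 x.2) e x.1.1 ?_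
    intro v hv u
    refine hP2 x.1 v ?_ u
    have := hinv x.2 (P x.1 v)
    rw [LinearMap.comp_apply] at hv
    rw [← this, hv, map_zero]
  choose Ψ hΨ using hfac
  have hmem : ∀ x, ((Matrix.toLin' x.2.1 ∘ₗ P x.1, Ψ x) :
      ((Fin n → F) →ₗ[F] (Fin h → F)) × Module.Dual F (HV F h (fun i => e i + 1))) ∈ YSet F n h e i0 y := by
    intro x
    apply LinearMap.ext
    intro l
    obtain ⟨v, rfl⟩ := hsurj x.1 x.2 l
    have h1 := x.1.2.1
    have h2 := LinearMap.congr_fun h1 v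
    simp only [Tmap, LinearMap.compr₂_apply, LinearMap.zero_apply] at h2
    rw [hΨ x, LinearMap.comp_apply, symM_powTuple] at h2
    exact h2
  have : Finite ((Fin n → F) →ₗ[F] (Fin h → F)) := Module.finite_of_finite F
  have : Finite (Module.Dual F (HV F h (fun i => e i + 1))) := Module.finite_of_finite F
  refine Nat.card_le_card_of_injective (fun x => (⟨_, hmem x⟩ : YSet F n h e i0 y)) ?_
  rintro ⟨φ, g⟩ ⟨φ', g'⟩ hx
  have hx' := congrArg Subtype.val hx
  simp only [Prod.mk.injEq] at hx'
  obtain ⟨h1, h2⟩ := hx'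
  have h3 : φ = φ' := by
    apply Subtype.ext
    have a1 := hΨ (φ, g)
    have a2 := hΨ (φ', g')
    simp only at a1 a2
    rw [a1, a2, h1, h2]
  subst h3
  congr 1
  apply Units.ext
  apply Matrix.toLin'.injective
  apply LinearMap.ext
  intro z
  obtain ⟨v, rfl⟩ := hP1 φ z
  exact LinearMap.congr_fun h1 v

theorem card_Y (F : Type*) [Field F] [Finite F] (n h : ℕ) {s : ℕ} (e : Fin s → ℕ) (i0 : Fin s)
    (x0 : Fin n) (M : ℕ) (hM : Module.finrank F (HV F h (fun i => e i + 1)) ≤ M) :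
    Nat.card (YSet F n h e i0 (Pi.single x0 1)) * Nat.card F ^ h ≤
      2 * Nat.card F ^ (h * n + M) := by
  classical
  have hfin : Finite ((Fin n → F) →ₗ[F] (Fin h → F)) := Module.finite_of_finite F
  have hfin2 : Finite (Module.Dual F (HV F h (fun i => e i + 1))) := Module.finite_of_finite F
  have : Fintype ((Fin n → F) →ₗ[F] (Fin h → F)) := Fintype.ofFinite _
  have hq : 0 < Nat.card F := Nat.card_pos
  set q := Nat.card F with hqdef
  let y : Fin n → F := Pi.single x0 1
  let D (π : (Fin n → F) →ₗ[F] (Fin h → F)) : Module.Dual F (HV F h (fun i => e i + 1)) →ₗ[F] Module.Dual F (Fin h → F) :=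
    (mulMap F h e (powTuple F h e i0 (π y))).dualMap
  have hY : Nat.card (YSet F n h e i0 y) = ∑ π, Nat.card (LinearMap.ker (D π)) := by
    rw [← Nat.card_sigma]
    exact Nat.card_congr ⟨fun x => ⟨x.1.1, ⟨x.1.2, x.2⟩⟩, fun x => ⟨(x.1, x.2.1), x.2.2⟩,
      fun _ => rfl, fun _ => rfl⟩
  have hdual : Nat.card (Module.Dual F (HV F h (fun i => e i + 1))) ≤ q ^ M := by
    rw [Module.natCard_eq_pow_finrank (K := F), Subspace.dual_finrank_eq]
    exact Nat.pow_le_pow_right hq hM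
  have hle : ∀ π, Nat.card (LinearMap.ker (D π)) ≤ q ^ M := fun π =>
    (Nat.card_le_card_of_injective _ Subtype.val_injective).trans hdual
  have hne : ∀ π, π y ≠ 0 → Nat.card (LinearMap.ker (D π)) * q ^ h ≤ q ^ M := by
    intro π hπ
    have hk := card_ker_mul (D π)
    have hinj : Function.Injective (mulMap F h e (powTuple F h e i0 (π y))) := by
      rw [injective_iff_map_eq_zero]
      intro l hl
      have h1 := congrArg (fun z => ((z i0 : homogeneousSubmodule (Fin h) F (e i0 + 1)) : MvPolynomial (Fin h) F)) hl
      simp [powTuple] at h1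
      rcases h1 with h1 | h1
      · exact absurd (lin_inj F h (by rw [h1.1, map_zero])) hπ
      · exact lin_inj F h (by rw [h1, map_zero])
    have hr : Module.finrank F (LinearMap.range (D π)) = h := by
      simp only [D]
      rw [LinearMap.finrank_range_dualMap_eq_finrank_range, LinearMap.finrank_range_of_inj hinj,
        Module.finrank_fin_fun]
    rw [hr] at hk
    rw [hk]
    exact hdual
  have hcardpi : Nat.card ((Fin n → F) →ₗ[F] (Fin h → F)) = q ^ (h * n) := by
    rw [Module.natCard_eq_pow_finrank (K := F), Module.finrank_linearMap]
    simp [mul_comm, hqdef]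
  let ev : ((Fin n → F) →ₗ[F] (Fin h → F)) →ₗ[F] (Fin h → F) := LinearMap.applyₗ y
  have hev : LinearMap.range ev = ⊤ := by
    rw [LinearMap.range_eq_top]
    intro z
    refine ⟨(LinearMap.proj x0 : (Fin n → F) →ₗ[F] F).smulRight z, ?_⟩
    simp [ev, y]
  have hker : (Finset.univ.filter fun π : (Fin n → F) →ₗ[F] (Fin h → F) => π y = 0).card * q ^ h = q ^ (h * n) := by
    rw [← hcardpi, ← card_ker_mul ev, hev, finrank_top, Module.finrank_fin_fun, ← Nat.card_eq_finsetCard]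
    congr 1
    refine Nat.card_congr (Equiv.subtypeEquivRight fun π => ?_)
    simp [ev]
  change Nat.card (YSet F n h e i0 y) * _ ≤ _
  rw [hY, Finset.sum_mul]
  calc ∑ π, Nat.card (LinearMap.ker (D π)) * q ^ h
      ≤ ∑ π : (Fin n → F) →ₗ[F] (Fin h → F), (q ^ M + if π y = 0 then q ^ M * q ^ h else 0) := by
        refine Finset.sum_le_sum fun π _ => ?_
        split_ifs with hπ
        · exact (Nat.mul_le_mul_right _ (hle π)).trans (Nat.le_add_left _ _)
        · simpa using hne π hπ
    _ = 2 * q ^ (h * n + M) := by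
        rw [Finset.sum_add_distrib, ← Finset.sum_filter, Finset.sum_const, Finset.sum_const,
          Finset.card_univ, ← Nat.card_eq_fintype_card, hcardpi, smul_eq_mul, smul_eq_mul,
          mul_comm (q ^ M) (q ^ h), ← mul_assoc, hker, pow_add]
        ring

theorem card_Phi_le (F : Type*) [Field F] [Finite F] (n h p : ℕ) {s : ℕ} (e : Fin s → ℕ) (i0 : Fin s)
    (x0 : Fin n)
    (hM : (∑ i, Nat.choose (e i + h) (e i + 1)) + h * n ≤ h * h + h * (p + 1)) :
    Nat.card (PhiSet F n h e i0 (Pi.single x0 1)) ≤ 2 ^ (h + 1) * Nat.card F ^ (h * p) := by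
  have h1 := card_GL_ge F h
  have h2 := card_Phi_mul_GL F n h e i0 (Pi.single x0 1)
  have h3 := card_Y F n h e i0 x0 _ (finrank_HV_le F h e)
  have hq : 0 < Nat.card F := Nat.card_pos
  set q := Nat.card F
  set A := Nat.card (PhiSet F n h e i0 (Pi.single x0 1))
  set Y := Nat.card (YSet F n h e i0 (Pi.single x0 1))
  set G := Nat.card (GL (Fin h) F)
  have h4 : A * q ^ (h * h + h) ≤ (2 ^ (h + 1) * q ^ (h * p)) * q ^ (h * h + h) := by
    calc A * q ^ (h * h + h) = A * q ^ (h * h) * q ^ h := by rw [pow_add]; ring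
      _ ≤ A * (2 ^ h * G) * q ^ h := by gcongr
      _ = 2 ^ h * ((A * G) * q ^ h) := by ring
      _ ≤ 2 ^ h * (Y * q ^ h) := by gcongr
      _ ≤ 2 ^ h * (2 * q ^ (h * n + ∑ i, Nat.choose (e i + h) (e i + 1))) := by gcongr
      _ ≤ 2 ^ h * (2 * q ^ (h * p + (h * h + h))) := by
        refine Nat.mul_le_mul_left _ (Nat.mul_le_mul_left _ (Nat.pow_le_pow_right hq ?_))
        linarith
      _ = _ := by rw [pow_add q, pow_succ]; ring
  exact Nat.le_of_mul_le_mul_right h4 (by positivity)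

theorem core (F : Type*) [Field F] [Finite F] (n p : ℕ) {s : ℕ} (e : Fin s → ℕ) (i0 : Fin s)
    (x0 : Fin n) (hF : 2 ^ (n + 2) ≤ Nat.card F)
    (hM : ∀ h ≤ n, (∑ i, Nat.choose (e i + h) (e i + 1)) + h * n ≤ h * h + h * (p + 1)) :
    ∃ a : Fin p → HV F n e, ∀ c : HV F n (fun i => e i + 1), ∃ (v : Fin p → Fin n → F) (w : Fin n → F),
      c = (∑ j, mulMap F n e (a j) (v j)) + mulMap F n e (powTuple F n e i0 (Pi.single x0 1)) w := by
  classical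
  have hfin2 : Finite (Module.Dual F (HV F n (fun i => e i + 1))) := Module.finite_of_finite F
  have : Fintype (Module.Dual F (HV F n (fun i => e i + 1))) := Fintype.ofFinite _
  have hfinU : Finite (HV F n e) := Module.finite_of_finite F
  let u0 := powTuple F n e i0 (Pi.single x0 1 : Fin n → F)
  let Φ := Finset.univ.filter fun φ => Tmap (mulMap F n e) φ u0 = 0
  refine exists_surj (mulMap F n e) u0 p Φ (by simp [Φ]) ?_
  let rk : Module.Dual F (HV F n (fun i => e i + 1)) → ℕ := fun φ =>
    Module.finrank F (LinearMap.range (Tmap (mulMap F n e) φ))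
  have hrk : ∀ φ ∈ Φ, rk φ ∈ Finset.range (n + 1) := by
    intro φ _
    have := Submodule.finrank_le (LinearMap.range (Tmap (mulMap F n e) φ))
    rw [Subspace.dual_finrank_eq, Module.finrank_fin_fun] at this
    simp only [rk, Finset.mem_range]
    omega
  rw [← Finset.sum_fiberwise_of_maps_to hrk]
  have hb : ∀ h ∈ Finset.range (n + 1), ∑ φ ∈ Φ with rk φ = h, Nat.card (LinearMap.ker (Tmap (mulMap F n e) φ)) ^ p
      ≤ 2 ^ (h + 1) * Nat.card (HV F n e) ^ p := by
    intro h hh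
    have hq : 0 < Nat.card F ^ (h * p) := pow_pos Nat.card_pos _
    refine Nat.le_of_mul_le_mul_right ?_ hq
    rw [Finset.sum_mul]
    have e1 : ∀ φ ∈ Φ.filter (fun φ => rk φ = h), Nat.card (LinearMap.ker (Tmap (mulMap F n e) φ)) ^ p * Nat.card F ^ (h * p)
        = Nat.card (HV F n e) ^ p := by
      intro φ hφ
      have := card_ker_mul (Tmap (mulMap F n e) φ)
      rw [← this, mul_pow, ← pow_mul]
      have h2 := (Finset.mem_filter.1 hφ).2
      simp only [rk] at h2
      rw [h2]
    rw [Finset.sum_congr rfl e1, Finset.sum_const, smul_eq_mul]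
    have e2 : (Φ.filter (fun φ => rk φ = h)).card = Nat.card (PhiSet F n h e i0 (Pi.single x0 1)) := by
      rw [← Nat.card_eq_finsetCard]
      refine Nat.card_congr (Equiv.subtypeEquivRight fun φ => ?_)
      simp [Φ, rk, PhiSet, u0]
    rw [e2]
    have := card_Phi_le F n h p e i0 x0 (hM h (by simpa [Nat.lt_succ_iff] using hh))
    calc _ ≤ (2 ^ (h + 1) * Nat.card F ^ (h * p)) * Nat.card (HV F n e) ^ p := by gcongr
      _ = _ := by ring
  have hU : 0 < Nat.card (HV F n e) ^ p := pow_pos Nat.card_pos _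
  calc _ ≤ ∑ h ∈ Finset.range (n + 1), 2 ^ (h + 1) * Nat.card (HV F n e) ^ p := Finset.sum_le_sum hb
    _ = (∑ h ∈ Finset.range (n + 1), 2 ^ (h + 1)) * Nat.card (HV F n e) ^ p := by rw [Finset.sum_mul]
    _ < 2 ^ (n + 2) * Nat.card (HV F n e) ^ p := by
      refine Nat.mul_lt_mul_of_pos_right ?_ hU
      have : ∀ m : ℕ, ∑ h ∈ Finset.range m, 2 ^ (h + 1) < 2 ^ (m + 1) := by
        intro m
        induction m with
        | zero => simp
        | succ m ih => rw [Finset.sum_range_succ, pow_succ 2 (m + 1)]; omega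
      exact this (n + 1)
    _ ≤ _ := Nat.mul_le_mul_right _ hF

/-- The columns: `a j` for `some j`, and the special column for `none`. -/
noncomputable def col {A : Type*} [CommRing A] {n p s : ℕ} (e : Fin s → ℕ) (i0 : Fin s) (x0 : Fin n)
    (a : Fin p → Fin s → MvPolynomial (Fin n) A) : Option (Fin p) → Fin s → MvPolynomial (Fin n) A
  | none => Pi.single i0 (X x0 ^ e i0)
  | some j => a j

/-- The products of the columns with the variables. -/
noncomputable def gen {A : Type*} [CommRing A] {n p s : ℕ} (e : Fin s → ℕ) (i0 : Fin s) (x0 : Fin n)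
    (a : Fin p → Fin s → MvPolynomial (Fin n) A) (x : Option (Fin p) × Fin n) :
    Fin s → MvPolynomial (Fin n) A :=
  fun i => col e i0 x0 a x.1 i * X x.2

theorem map_gen {A B : Type*} [CommRing A] [CommRing B] (f : A →+* B) {n p s : ℕ} (e : Fin s → ℕ)
    (i0 : Fin s) (x0 : Fin n)
    (a : Fin p → Fin s → MvPolynomial (Fin n) A) (x : Option (Fin p) × Fin n) (i : Fin s) :
    map f (gen e i0 x0 a x i) = gen e i0 x0 (fun j i => map f (a j i)) x i := by
  rcases x with ⟨_ | j, l⟩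
  · by_cases hi : i = i0
    · subst hi; simp [gen, col]
    · simp [gen, col, hi]
  · simp [gen, col]

theorem gen_hom {A : Type*} [CommRing A] {n p s : ℕ} (e : Fin s → ℕ) (i0 : Fin s) (x0 : Fin n)
    (a : Fin p → Fin s → MvPolynomial (Fin n) A) (ha : ∀ j i, (a j i).IsHomogeneous (e i))
    (x : Option (Fin p) × Fin n) (i : Fin s) : (gen e i0 x0 a x i).IsHomogeneous (e i + 1) := by
  refine IsHomogeneous.mul ?_ (isHomogeneous_X _ _)
  rcases x with ⟨_ | j, l⟩
  · by_cases hi : i = i0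
    · subst hi; simpa [col] using isHomogeneous_X_pow (R := A) x0 (e i)
    · simpa [col, hi] using isHomogeneous_zero _ _ _
  · exact ha j i

theorem core' (F : Type*) [Field F] [Finite F] (n p : ℕ) {s : ℕ} (e : Fin s → ℕ) (i0 : Fin s)
    (x0 : Fin n) (hF : 2 ^ (n + 2) ≤ Nat.card F)
    (hM : ∀ h ≤ n, (∑ i, Nat.choose (e i + h) (e i + 1)) + h * n ≤ h * h + h * (p + 1)) :
    ∃ a : Fin p → Fin s → MvPolynomial (Fin n) F, (∀ j i, (a j i).IsHomogeneous (e i)) ∧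
      ∀ c : Fin s → MvPolynomial (Fin n) F, (∀ i, (c i).IsHomogeneous (e i + 1)) →
        ∃ z : Option (Fin p) × Fin n → F, c = ∑ x, z x • gen e i0 x0 a x := by
  classical
  obtain ⟨a, ha⟩ := core F n p e i0 x0 hF hM
  refine ⟨fun j i => a j i, fun j i => (a j i).2, fun c hc => ?_⟩
  obtain ⟨v, w, hvw⟩ := ha (fun i => ⟨c i, hc i⟩)
  refine ⟨fun x => (x.1.elim w v) x.2, ?_⟩
  ext1 i
  have h1 := congrArg (fun z => ((z i : homogeneousSubmodule (Fin n) F (e i + 1)) : MvPolynomial (Fin n) F)) hvw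
  simp only [Pi.add_apply, Finset.sum_apply, Submodule.coe_add, Submodule.coe_sum, mulMap_apply] at h1
  rw [h1, Fintype.sum_prod_type, Fintype.sum_option, add_comm]
  simp only [Pi.add_apply, Finset.sum_apply, Pi.smul_apply, gen, col, Option.elim, lin_apply,
    Finset.mul_sum, mul_smul_comm]
  congr 1
  by_cases hi : i = i0
  · subst hi
    simp [powTuple, ← lin_apply, lin_single]
  · simp [powTuple, hi]

theorem hom_lift {q n d : ℕ} (f : MvPolynomial (Fin n) (ZMod q)) (hf : f.IsHomogeneous d) :
    ∃ g : MvPolynomial (Fin n) ℤ, g.IsHomogeneous d ∧ map (Int.castRingHom (ZMod q)) g = f := by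
  classical
  obtain ⟨g, hg⟩ := map_surjective (σ := Fin n) (Int.castRingHom (ZMod q)) ZMod.intCast_surjective f
  refine ⟨homogeneousComponent d g, homogeneousComponent_isHomogeneous _ _, ?_⟩
  conv_rhs => rw [← homogeneousComponent_eq_self hf, ← hg]
  ext m
  simp only [coeff_map, coeff_homogeneousComponent]
  split_ifs <;> simp

theorem int_version (n p : ℕ) {s : ℕ} (e : Fin s → ℕ) (i0 : Fin s) (x0 : Fin n)
    (hM : ∀ h ≤ n, (∑ i, Nat.choose (e i + h) (e i + 1)) + h * n ≤ h * h + h * (p + 1)) :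
    ∃ a : Fin p → Fin s → MvPolynomial (Fin n) ℤ, (∀ j i, (a j i).IsHomogeneous (e i)) ∧
      ∃ N : ℤ, N ≠ 0 ∧ ∀ c : Fin s → MvPolynomial (Fin n) ℤ, (∀ i, (c i).IsHomogeneous (e i + 1)) →
        ∃ z : Option (Fin p) × Fin n → ℤ, N • c = ∑ x, z x • gen e i0 x0 a x := by
  classical
  obtain ⟨q, hq, hqp⟩ := Nat.exists_infinite_primes (2 ^ (n + 2))
  have : Fact q.Prime := ⟨hqp⟩
  obtain ⟨a, ha, hc⟩ := core' (ZMod q) n p e i0 x0 (by simpa using hq) hM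
  choose b hb1 hb2 using fun j i => hom_lift (a j i) (ha j i)
  refine ⟨b, hb1, ?_⟩
  let T : Submodule ℤ (Fin s → MvPolynomial (Fin n) ℤ) :=
    Submodule.pi Set.univ fun i => homogeneousSubmodule (Fin n) ℤ (e i + 1)
  have hT : T.FG := Submodule.fg_pi fun i => homogeneousSubmodule_fg _ _ _
  let U : Submodule ℤ (Fin s → MvPolynomial (Fin n) ℤ) := Submodule.span ℤ (Set.range (gen e i0 x0 b))
  have hTU : T ≤ U ⊔ (Ideal.span {(q : ℤ)}) • T := by
    intro c hcT
    have hcT' : ∀ i, (c i).IsHomogeneous (e i + 1) := fun i => hcT i trivial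
    obtain ⟨z, hz⟩ := hc (fun i => map (Int.castRingHom (ZMod q)) (c i)) fun i => (hcT' i).map _
    choose y hy using fun x => ZMod.intCast_surjective (z x)
    have hu : ∑ x, y x • gen e i0 x0 b x ∈ U :=
      Submodule.sum_mem _ fun x _ => Submodule.smul_mem _ _ (Submodule.subset_span ⟨x, rfl⟩)
    have hdiv : ∀ i, C (q : ℤ) ∣ c i - (∑ x, y x • gen e i0 x0 b x) i := by
      intro i
      rw [C_dvd_iff_zmod, map_sub, sub_eq_zero]
      have := congrFun hz i
      rw [this]
      simp only [Finset.sum_apply, Pi.smul_apply, map_sum, smul_eq_C_mul, map_mul, map_C, map_gen, hb2]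
      simp [hy]
    choose c' hc' using hdiv
    have hq0 : (q : ℤ) ≠ 0 := by exact_mod_cast hqp.ne_zero
    have hc'T : c' ∈ T := by
      intro i _
      have h1 : (C (q : ℤ) * c' i).IsHomogeneous (e i + 1) := by
        rw [← hc' i]
        refine (hcT' i).sub ?_
        rw [Finset.sum_apply]
        refine IsHomogeneous.sum _ _ _ fun x _ => ?_
        rw [Pi.smul_apply, smul_eq_C_mul]
        exact (gen_hom e i0 x0 b hb1 x i).C_mul _
      intro m hm
      refine h1 ?_
      rw [coeff_C_mul]
      exact mul_ne_zero hq0 hm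
    have : c = ∑ x, y x • gen e i0 x0 b x + (q : ℤ) • c' := by
      ext1 i
      rw [Pi.add_apply, Pi.smul_apply, smul_eq_C_mul, ← hc' i]
      ring
    rw [this]
    exact Submodule.add_mem_sup hu (Submodule.smul_mem_smul (Ideal.mem_span_singleton_self _) hc'T)
  obtain ⟨N, hN1, hN2⟩ := Submodule.exists_sub_one_mem_and_smul_le_of_fg_of_le_sup hT le_rfl hTU
  refine ⟨N, ?_, fun c hc => ?_⟩
  · rintro rfl
    rw [Ideal.mem_span_singleton, zero_sub, dvd_neg] at hN1
    have := Int.natCast_dvd_natCast.1 (by simpa using hN1 : (q : ℤ) ∣ ((1 : ℕ) : ℤ))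
    exact hqp.one_lt.ne' (Nat.dvd_one.1 this)
  · have h1 : N • c ∈ U := hN2 (Submodule.smul_mem_pointwise_smul c N T fun i _ => hc i)
    obtain ⟨z, hz⟩ := (Submodule.mem_span_range_iff_exists_fun ℤ).1 h1
    exact ⟨z, hz.symm⟩

theorem field_version (k : Type*) [Field k] [CharZero k] (n p : ℕ) {s : ℕ} (e : Fin s → ℕ) (i0 : Fin s) (x0 : Fin n)
    (hM : ∀ h ≤ n, (∑ i, Nat.choose (e i + h) (e i + 1)) + h * n ≤ h * h + h * (p + 1)) :
    ∃ a : Fin p → Fin s → MvPolynomial (Fin n) k, (∀ j i, (a j i).IsHomogeneous (e i)) ∧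
      ∀ c : Fin s → MvPolynomial (Fin n) k, (∀ i, (c i).IsHomogeneous (e i + 1)) →
        ∃ z : Option (Fin p) × Fin n → k, c = ∑ x, z x • gen e i0 x0 a x := by
  classical
  obtain ⟨a, ha, N, hN, hc⟩ := int_version n p e i0 x0 hM
  let f := Int.castRingHom k
  refine ⟨fun j i => map f (a j i), fun j i => (ha j i).map f, fun c hch => ?_⟩
  let U : Submodule k (Fin s → MvPolynomial (Fin n) k) :=
    Submodule.span k (Set.range (gen e i0 x0 fun j i => map f (a j i)))
  suffices h : c ∈ U by
    obtain ⟨z, hz⟩ := (Submodule.mem_span_range_iff_exists_fun k).1 h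
    exact ⟨z, hz.symm⟩
  have hmono : ∀ i (m : Fin n →₀ ℕ), m.degree = e i + 1 →
      (Pi.single i (monomial m 1) : Fin s → MvPolynomial (Fin n) k) ∈ U := by
    intro i m hm
    obtain ⟨z, hz⟩ := hc (Pi.single i (monomial m 1)) (by
      intro j
      by_cases hj : j = i
      · subst hj; simpa using isHomogeneous_monomial (1 : ℤ) hm
      · simpa [hj] using isHomogeneous_zero _ _ _)
    have hNk : (N : k) ≠ 0 := by exact_mod_cast hN
    have h1 : (N : k) • (Pi.single i (monomial m 1) : Fin s → MvPolynomial (Fin n) k) =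
        ∑ x, (z x : k) • gen e i0 x0 (fun j i => map f (a j i)) x := by
      ext1 j
      have := congrArg (map f) (congrFun hz j)
      simp only [Finset.sum_apply, Pi.smul_apply, map_sum, smul_eq_C_mul, map_mul, map_C, map_gen] at this
      simp only [Finset.sum_apply, Pi.smul_apply, smul_eq_C_mul]
      simp only [f, eq_intCast] at this ⊢
      rw [← this]
      congr 1
      by_cases hj : j = i
      · subst hj; simp
      · simp [hj]
    have h2 : (N : k) • (Pi.single i (monomial m 1) : Fin s → MvPolynomial (Fin n) k) ∈ U := by
      rw [h1]
      exact Submodule.sum_mem _ fun x _ => Submodule.smul_mem _ _ (Submodule.subset_span ⟨x, rfl⟩)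
    exact (Submodule.smul_mem_iff _ hNk).1 h2
  have hsingle : ∀ i, (Pi.single i (c i) : Fin s → MvPolynomial (Fin n) k) ∈ U := by
    intro i
    have : (Pi.single i (c i) : Fin s → MvPolynomial (Fin n) k) =
        ∑ m ∈ (c i).support, (coeff m (c i)) • (Pi.single i (monomial m 1) : Fin s → MvPolynomial (Fin n) k) := by
      have h1 : ∀ g, (Pi.single i g : Fin s → MvPolynomial (Fin n) k) =
        LinearMap.single k (fun _ => MvPolynomial (Fin n) k) i g := fun _ => rfl
      simp_rw [h1, ← map_smul, ← map_sum]
      congr 1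
      conv_lhs => rw [as_sum (c i)]
      simp [smul_monomial]
    rw [this]
    refine Submodule.sum_mem _ fun m hm => Submodule.smul_mem _ _ (hmono i m ?_)
    by_contra hne
    exact (mem_support_iff.1 hm) ((hch i).coeff_eq_zero hne)
  rw [← Finset.univ_sum_single c]
  exact Submodule.sum_mem _ fun i _ => hsingle i

/-- The maximal rank lemma (Lemmas 5.1–5.3, graded-module form): for
`2 ≤ d₁ ≤ ⋯ ≤ d_{s-1} < d_s = t` with `t ≥ 3` and
`(r+2)p + r + 1 ≥ Σᵢ C(dᵢ+r+1, r+1) - 1`, there exist homogeneous elements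
`a_{i,j} ∈ R_{dᵢ-1}` and `bᵢ ∈ R_{dᵢ-1}` with `x̄₀·bᵢ = 0` such that the linear map
`(R₁)^{p+1} → ⊕ᵢ R_{dᵢ}`, `(v₁,…,v_p,w) ↦ (Σⱼ a_{i,j}·vⱼ + bᵢ·w)ᵢ`, is surjective. -/
theorem stmt0 (k : Type*) [Field k] [IsAlgClosed k] [CharZero k]
    (r s p t : ℕ) (hs : 1 ≤ s) (d : Fin s → ℕ) (hmono : Monotone d)
    (hd2 : ∀ i, 2 ≤ d i)
    (hlast : ∀ _ : 2 ≤ s, d ⟨s - 2, by omega⟩ < d ⟨s - 1, by omega⟩)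
    (ht : t = d ⟨s - 1, by omega⟩) (ht3 : 3 ≤ t)
    (hp : (∑ i, Nat.choose (d i + r + 1) (r + 1)) - 1 ≤ (r + 2) * p + r + 1) :
    ∃ (a : Fin s → Fin p → fatRing k r t) (b : Fin s → fatRing k r t),
      (∀ i j, a i j ∈ fatRingComp k r t (d i - 1)) ∧
      (∀ i, b i ∈ fatRingComp k r t (d i - 1)) ∧
      (∀ i, Ideal.Quotient.mk (Ideal.span {(X 0 : MvPolynomial (Fin (r + 2)) k) ^ t})
          (X 0) * b i = 0) ∧
      (∀ c : Fin s → fatRing k r t, (∀ i, c i ∈ fatRingComp k r t (d i)) →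
        ∃ (v : Fin p → fatRing k r t) (w : fatRing k r t),
          (∀ j, v j ∈ fatRingComp k r t 1) ∧ w ∈ fatRingComp k r t 1 ∧
          ∀ i, c i = (∑ j, a i j * v j) + b i * w) := by
  classical
  have hn := fun i => hd2 i
  let i0 : Fin s := ⟨s - 1, by omega⟩
  let e : Fin s → ℕ := fun i => d i - 1
  have he : ∀ i, d i = e i + 1 := fun i => by have := hd2 i; simp only [e]; omega
  have het : e i0 + 1 = t := by rw [← he, ht]
  have hG : ∑ i, Nat.choose (e i + (r + 2)) (e i + 1) ≤ (r + 2) * (p + 1) := by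
    have h1 : ∀ i, Nat.choose (d i + r + 1) (r + 1) = Nat.choose (e i + (r + 2)) (e i + 1) := by
      intro i
      rw [he i]
      have : e i + 1 + r + 1 = e i + (r + 2) := by ring
      rw [this]
      exact Nat.choose_symm_of_eq_add (by omega)
    simp_rw [h1] at hp
    rw [mul_add]
    omega
  obtain ⟨a, ha, hc⟩ := field_version k (r + 2) p e i0 0
    (num_main (r + 2) s p e i0 (by omega) hG)
  let I := Ideal.span {(X 0 : MvPolynomial (Fin (r + 2)) k) ^ t}
  have hmem : ∀ (f : MvPolynomial (Fin (r + 2)) k) (m : ℕ), f.IsHomogeneous m →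
      Ideal.Quotient.mk I f ∈ fatRingComp k r t m := fun f m hf => ⟨f, hf, rfl⟩
  refine ⟨fun i j => Ideal.Quotient.mk I (a j i),
    fun i => Ideal.Quotient.mk I (col (p := p) e i0 0 a none i), ?_, ?_, ?_, ?_⟩
  · intro i j
    exact hmem _ _ (ha j i)
  · intro i
    refine hmem _ _ ?_
    change IsHomogeneous _ (e i)
    by_cases hi : i = i0
    · subst hi; simpa [col] using isHomogeneous_X_pow (R := k) (0 : Fin (r + 2)) (e i0)
    · simpa [col, hi] using isHomogeneous_zero _ _ _
  · intro i
    change Ideal.Quotient.mk I (X 0) * _ = 0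
    rw [← map_mul, Ideal.Quotient.eq_zero_iff_mem]
    by_cases hi : i = i0
    · subst hi
      simp only [col, Pi.single_eq_same]
      rw [← pow_succ', het]
      exact Ideal.mem_span_singleton_self _
    · simp [col, hi]
  · intro c hcc
    choose c' hc'1 hc'2 using hcc
    obtain ⟨z, hz⟩ := hc c' (fun i => by rw [← he i]; exact hc'1 i)
    have hlin : ∀ y : Fin (r + 2) → k, (∑ l, y l • (X l : MvPolynomial (Fin (r + 2)) k)).IsHomogeneous 1 :=
      fun y => lin_hom k (r + 2) y
    refine ⟨fun j => Ideal.Quotient.mk I (∑ l, z (some j, l) • X l),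
      Ideal.Quotient.mk I (∑ l, z (none, l) • X l), fun j => hmem _ _ (hlin _), hmem _ _ (hlin _), fun i => ?_⟩
    have h1 : c i = Ideal.Quotient.mk I (c' i) := (hc'2 i).symm
    rw [h1, hz]
    simp only [← map_mul, ← map_sum, ← map_add]
    congr 1
    rw [Fintype.sum_prod_type, Fintype.sum_option]
    simp only [Pi.add_apply, Finset.sum_apply, Pi.smul_apply, gen, col, Finset.mul_sum, mul_smul_comm]
    exact add_comm _ _
end

section
/- Let r ≥ 0, s ≥ 1, p ≥ 0 and u be integers with 1 ≤ u ≤ r+2, and let d_1 ≤ … ≤ d_s be integers with d_i ≥ 2 for all i, with d_{s-1} < d_s when s ≥ 2, and with d_s ≥ 3. If (r+2)·p + r + 1 ≥ h^0(r+2, dd) − 1, then, as integers, h^0(u, dd) + (r + 1 − u)·u ≤ p·u. -/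
theorem aux_rec (d v : ℕ) :
    (v + 1) * Nat.choose (d + (v + 1)) (v + 1) = (d + v + 1) * Nat.choose (d + v) v := by
  have h := Nat.add_one_mul_choose_eq (d + v) v
  rw [← add_assoc]
  linarith

theorem aux_ge (d v : ℕ) (hd : 3 ≤ d) :
    (v + 2) * Nat.choose (d + v) v + (v + 1) * (v + 2)
      ≤ (v + 1) * Nat.choose (d + (v + 1)) (v + 1) := by
  rw [aux_rec]
  have h1 : Nat.choose (2 + v) v ≤ Nat.choose (d + v) v := Nat.choose_le_choose v (by omega)
  have h2 : 2 * Nat.choose (2 + v) v = (v + 1) * (v + 2) := by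
    have e : Nat.choose (2 + v) v = Nat.choose (v + 2) 2 := by
      rw [add_comm, Nat.choose_symm_add]
    have h := Nat.add_one_mul_choose_eq (v + 1) 1
    rw [Nat.choose_one_right] at h
    rw [e]
    linarith
  obtain ⟨k, rfl⟩ := Nat.exists_eq_add_of_le hd
  nlinarith [Nat.zero_le (k * Nat.choose (3 + k + v) v)]

theorem aux_ge' (d v : ℕ) (hd : 2 ≤ d) :
    (v + 2) * Nat.choose (d + v) v
      ≤ (v + 1) * Nat.choose (d + (v + 1)) (v + 1) := by
  rw [aux_rec]
  exact Nat.mul_le_mul_right _ (by omega)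

theorem aux_sum (s : ℕ) (d : Fin s → ℕ) (hd2 : ∀ i, 2 ≤ d i) (j : Fin s) (hj : 3 ≤ d j)
    (v : ℕ) :
    (v + 2) * (∑ i, Nat.choose (d i + v) v) + (v + 1) * (v + 2)
      ≤ (v + 1) * ∑ i, Nat.choose (d i + (v + 1)) (v + 1) := by
  rw [← Finset.add_sum_erase _ _ (Finset.mem_univ j),
    ← Finset.add_sum_erase _ (fun i => Nat.choose (d i + (v + 1)) (v + 1)) (Finset.mem_univ j)]
  have h1 := aux_ge (d j) v hj
  have h2 : (v + 2) * (∑ i ∈ Finset.univ.erase j, Nat.choose (d i + v) v)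
      ≤ (v + 1) * ∑ i ∈ Finset.univ.erase j, Nat.choose (d i + (v + 1)) (v + 1) := by
    rw [Finset.mul_sum, Finset.mul_sum]
    exact Finset.sum_le_sum fun i _ => aux_ge' (d i) v (hd2 i)
  simp only [mul_add] at *
  linarith

theorem aux_ind (S : ℕ → ℕ)
    (h : ∀ v, (v + 2) * S v + (v + 1) * (v + 2) ≤ (v + 1) * S (v + 1)) (v k : ℕ) :
    (S v : ℚ) / (v + 1) + k ≤ (S (v + k) : ℚ) / (v + k + 1) := by
  induction k with
  | zero => simp
  | succ k ih =>
    have h1 := h (v + k)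
    have h2 : (S (v + k) : ℚ) / (v + k + 1) + 1 ≤ (S (v + k + 1) : ℚ) / (v + k + 2) := by
      have h3 : ((v : ℚ) + k + 2) * S (v + k) + (v + k + 1) * (v + k + 2)
          ≤ (v + k + 1) * S (v + k + 1) := by exact_mod_cast h1
      have e : (S (v + k) : ℚ) / (v + k + 1) + 1 = (S (v + k) + (v + k + 1)) / (v + k + 1) := by
        field_simp
      rw [e, div_le_div_iff₀ (by positivity) (by positivity)]
      linarith
    have e : ((v : ℚ) + ((k + 1 : ℕ) : ℚ) + 1) = v + k + 2 := by push_cast; ring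
    rw [e, ← add_assoc v k 1]
    push_cast
    linarith

/-- Sublemma 5.7 (key numerical inequality for the maximal rank lemma):
for `1 ≤ u ≤ r+2`, the hypothesis `(r+2)p + r + 1 ≥ h⁰(r+2, dd) - 1` implies
`h⁰(u, dd) + (r+1-u)·u ≤ p·u` as integers, where `h⁰(v, e) = C(e+v-1, v-1)`. -/
theorem stmt1 (r s p u : ℕ) (hs : 1 ≤ s) (hu1 : 1 ≤ u) (hu2 : u ≤ r + 2)
    (d : Fin s → ℕ) (hmono : Monotone d) (hd2 : ∀ i, 2 ≤ d i)
    (hlast : ∀ _ : 2 ≤ s, d ⟨s - 2, by omega⟩ < d ⟨s - 1, by omega⟩)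
    (hd3 : 3 ≤ d ⟨s - 1, by omega⟩)
    (hp : (∑ i, Nat.choose (d i + r + 1) (r + 1)) - 1 ≤ (r + 2) * p + r + 1) :
    (∑ i, (Nat.choose (d i + u - 1) (u - 1) : ℤ)) + ((r : ℤ) + 1 - (u : ℤ)) * u
      ≤ (p : ℤ) * u := by
  obtain ⟨v, rfl⟩ := Nat.exists_eq_add_of_le' hu1
  obtain ⟨k, hk⟩ := Nat.exists_eq_add_of_le (show v ≤ r + 1 by omega)
  have hi := aux_ind (fun v => ∑ i, Nat.choose (d i + v) v) (aux_sum s d hd2 _ hd3) v k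
  simp only [← hk] at hi
  have hp' : (∑ i, Nat.choose (d i + (r + 1)) (r + 1)) ≤ (r + 2) * (p + 1) := by
    simp only [← add_assoc]
    have : (r + 2) * (p + 1) = (r + 2) * p + r + 2 := by ring
    omega
  have hkq : (r : ℚ) + 1 = v + k := by exact_mod_cast hk
  have hb : ((∑ i, Nat.choose (d i + (r + 1)) (r + 1) : ℕ) : ℚ) / (v + k + 1) ≤ p + 1 := by
    rw [← hkq, div_le_iff₀ (by positivity)]
    have : ((∑ i, Nat.choose (d i + (r + 1)) (r + 1) : ℕ) : ℚ) ≤ (r + 2) * (p + 1) := by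
      exact_mod_cast hp'
    linarith
  have hc : ((∑ i, Nat.choose (d i + v) v : ℕ) : ℚ) / (v + 1) ≤ p + 1 - k := by linarith
  rw [div_le_iff₀ (by positivity)] at hc
  have hz : ((∑ i, Nat.choose (d i + v) v : ℕ) : ℤ) ≤ (p + 1 - k) * (v + 1) := by
    exact_mod_cast hc
  have hkz : (r : ℤ) + 1 = v + k := by exact_mod_cast hk
  have e : ∀ i, d i + (v + 1) - 1 = d i + v := fun i => by omega
  simp only [e, Nat.add_sub_cancel, hkz]
  push_cast at hz ⊢
  linarith
end

section
/- Let r ≥ 0 and s ≥ 1 be integers and let d_1, …, d_s be integers with d_i ≥ 2 for all i and d_s ≥ 3. Then s·(r+2) + (r+1)^2 ≤ Σ_{i=1}^s C(d_i + r + 1, r + 1). -/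
lemma aux_two (r : ℕ) : 2 * r + 3 ≤ Nat.choose (r + 3) (r + 1) := by
  induction r with
  | zero => decide
  | succ n ih =>
    have h := Nat.choose_succ_succ (n + 3) (n + 1)
    have h2 : Nat.choose (n + 3) (n + 2) = n + 3 := Nat.choose_succ_self_right (n + 2)
    simp only [Nat.succ_eq_add_one] at h
    have e : n + 1 + 3 = n + 3 + 1 := by omega
    rw [e, h]
    have e2 : n + 1 + 1 = n + 2 := by omega
    rw [e2, h2]
    omega

lemma aux_three (r : ℕ) : (r + 2) + (r + 1) ^ 2 ≤ Nat.choose (r + 4) (r + 1) := by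
  induction r with
  | zero => decide
  | succ n ih =>
    have h := Nat.choose_succ_succ (n + 4) (n + 1)
    have h2 := aux_two (n + 1)
    simp only [Nat.succ_eq_add_one] at h
    have e : n + 1 + 4 = n + 4 + 1 := by omega
    have e3 : n + 1 + 3 = n + 4 := by omega
    rw [e3] at h2
    rw [e, h]
    nlinarith

/-- Case `u = 1` of Sublemma 5.7: if all `dᵢ ≥ 2` and `d_s ≥ 3`, then
`s(r+2) + (r+1)² ≤ Σᵢ C(dᵢ + r + 1, r + 1)`. -/
theorem stmt9 (r s : ℕ) (hs : 1 ≤ s) (d : Fin s → ℕ)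
    (hd2 : ∀ i, 2 ≤ d i) (hd3 : 3 ≤ d ⟨s - 1, by omega⟩) :
    s * (r + 2) + (r + 1) ^ 2 ≤ ∑ i, Nat.choose (d i + r + 1) (r + 1) := by
  obtain ⟨n, rfl⟩ : ∃ n, s = n + 1 := ⟨s - 1, by omega⟩
  have hl : 3 ≤ d (Fin.last n) := hd3
  rw [Fin.sum_univ_castSucc]
  have h1 : n * (r + 2) ≤ ∑ i : Fin n, Nat.choose (d i.castSucc + r + 1) (r + 1) := by
    have := Finset.card_nsmul_le_sum (Finset.univ : Finset (Fin n))
      (fun i => Nat.choose (d i.castSucc + r + 1) (r + 1)) (r + 2) (fun i _ => by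
        have h := hd2 i.castSucc
        have h' := aux_two r
        have := Nat.choose_le_choose (r + 1) (show r + 3 ≤ d i.castSucc + r + 1 by omega)
        show r + 2 ≤ Nat.choose (d i.castSucc + r + 1) (r + 1)
        omega)
    simpa using this
  have h2 := Nat.choose_le_choose (r + 1) (show r + 4 ≤ d (Fin.last n) + r + 1 by omega)
  have h3 := aux_three r
  have h4 : (n + 1) * (r + 2) = n * (r + 2) + (r + 2) := by ring
  omega
end

section
/- Let r ≥ 0 and s ≥ 1 be integers and let d_1, …, d_s be integers with d_i ≥ 2 for all i and d_s ≥ 3. Define f : ℕ → ℤ by f(v) := Σ_{i=1}^s C(d_i + v − 1, v − 1) + (r + 1 − v)·v. Then for every integer u ≥ 1 one has f(u+2) − 2·f(u+1) + f(u) = Σ_{i=1}^s C(d_i + u − 1, u + 1) − 2, and this quantity is nonnegative; in particular f is convex on the integers u ≥ 1. -/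
/-- Convexity argument concluding the proof of Sublemma 5.7: for
`f(v) = Σᵢ C(dᵢ + v - 1, v - 1) + (r + 1 - v)·v`, the second discrete derivative at any
`u ≥ 1` equals `Σᵢ C(dᵢ + u - 1, u + 1) - 2` and is nonnegative, so `f` is convex. -/
theorem stmt11 (r s : ℕ) (hs : 1 ≤ s) (d : Fin s → ℕ)
    (hd2 : ∀ i, 2 ≤ d i) (hd3 : 3 ≤ d ⟨s - 1, by omega⟩)
    (f : ℕ → ℤ)
    (hf : ∀ v : ℕ, f v = (∑ i, (Nat.choose (d i + v - 1) (v - 1) : ℤ))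
      + ((r : ℤ) + 1 - (v : ℤ)) * (v : ℤ)) :
    ∀ u : ℕ, 1 ≤ u →
      f (u + 2) - 2 * f (u + 1) + f u
        = (∑ i, (Nat.choose (d i + u - 1) (u + 1) : ℤ)) - 2 ∧
      0 ≤ f (u + 2) - 2 * f (u + 1) + f u := by
  intro u hu
  obtain ⟨w, rfl⟩ : ∃ w, u = w + 1 := ⟨u - 1, by omega⟩
  have key : f (w + 1 + 2) - 2 * f (w + 1 + 1) + f (w + 1)
      = (∑ i, (Nat.choose (d i + (w + 1) - 1) (w + 1 + 1) : ℤ)) - 2 := by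
    have hsum : (∑ i, (Nat.choose (d i + (w + 1 + 2) - 1) (w + 1 + 2 - 1) : ℤ))
        - 2 * (∑ i, (Nat.choose (d i + (w + 1 + 1) - 1) (w + 1 + 1 - 1) : ℤ))
        + (∑ i, (Nat.choose (d i + (w + 1) - 1) (w + 1 - 1) : ℤ))
        = ∑ i, (Nat.choose (d i + (w + 1) - 1) (w + 1 + 1) : ℤ) := by
      rw [Finset.mul_sum, ← Finset.sum_sub_distrib, ← Finset.sum_add_distrib]
      refine Finset.sum_congr rfl fun i _ => ?_
      have e1 : d i + (w + 1 + 2) - 1 = d i + w + 1 + 1 := by omega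
      have e2 : d i + (w + 1 + 1) - 1 = d i + w + 1 := by omega
      have e3 : d i + (w + 1) - 1 = d i + w := by omega
      have e4 : w + 1 + 2 - 1 = w + 1 + 1 := by omega
      have e5 : w + 1 + 1 - 1 = w + 1 := by omega
      have e6 : w + 1 - 1 = w := by omega
      rw [e1, e2, e3, e4, e5, e6, Nat.choose_succ_succ' (d i + w + 1) (w + 1),
        Nat.choose_succ_succ' (d i + w) w, Nat.choose_succ_succ' (d i + w) (w + 1)]
      push_cast
      ring
    rw [hf, hf, hf, ← hsum]
    push_cast
    ring
  refine ⟨key, ?_⟩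
  rw [key]
  have h1 : (Nat.choose (d ⟨s - 1, by omega⟩ + (w + 1) - 1) (w + 1 + 1) : ℤ)
      ≤ ∑ i, (Nat.choose (d i + (w + 1) - 1) (w + 1 + 1) : ℤ) :=
    Finset.single_le_sum (f := fun i => (Nat.choose (d i + (w + 1) - 1) (w + 1 + 1) : ℤ))
      (fun i _ => by positivity) (Finset.mem_univ _)
  have h2 : Nat.choose (w + 1 + 1 + 1) (w + 1 + 1)
      ≤ Nat.choose (d ⟨s - 1, by omega⟩ + (w + 1) - 1) (w + 1 + 1) :=
    Nat.choose_le_choose _ (by omega)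
  rw [Nat.choose_succ_self_right] at h2
  omega
end
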